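/- Let G be a finite undirected multigraph and A an Abelian group. The Abelian group B(V,A) of all balanceable functions g:V→A is isomorphic to A^{con₃(G)} × (2A)^{|V|−con₃(G)}, where con₃(G) is the number of 3-edge-connected equivalence classes of vertices and 2A is the image of the doubling map a↦2a on A. -/

import Mathlib

open Finset

/-- A finite undirected multigraph: each edge `e : E` has an unordered pair of
endpoints `ends e : Sym2 V`.  Loops and parallel edges are allowed and the graph
need not be connected. -/
structure Multigraph (V E : Type*) where
  ends : E → Sym2 V

namespace Multigraph

variable {V E : Type*}

/-- `G.IsChain x y p` : `p` is an alternating sequence `v₁,e₁,…,vₙ,eₙ` (encoded as a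
list of vertex-edge pairs) which forms a walk from `x` to `y` (the final vertex `y`
is omitted, i.e. this is "truncated"). -/
def IsChain (G : Multigraph V E) : V → V → List (V × E) → Prop
  | x, y, [] => x = y
  | x, y, (v, e) :: rest => v = x ∧ ∃ w, G.ends e = s(x, w) ∧ G.IsChain w y rest

/-- A truncated trail (ttrail) from `x` to `y`: an alternating walk with no repeated
edges, final vertex omitted. -/
def IsTtrail (G : Multigraph V E) (x y : V) (p : List (V × E)) : Prop :=
  G.IsChain x y p ∧ (p.map Prod.snd).Nodup

/-- A cycle: a closed ttrail with no repeated vertices. -/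
def IsCycle (G : Multigraph V E) (x : V) (p : List (V × E)) : Prop :=
  G.IsTtrail x x p ∧ (p.map Prod.fst).Nodup

/-- Two ttrails are edge-disjoint if they have no common edges. -/
def EdgeDisjoint (p q : List (V × E)) : Prop :=
  ∀ e, e ∈ p.map Prod.snd → e ∉ q.map Prod.snd

/-- `k`-edge-connectivity: two distinct vertices are `k`-edge-connected if there are
`k` pairwise edge-disjoint ttrails between them; every vertex is `k`-edge-connected
to itself. -/
def KConn (G : Multigraph V E) (k : ℕ) (v w : V) : Prop :=
  v = w ∨ ∃ p : Fin k → List (V × E),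
    (∀ i, G.IsTtrail v w (p i)) ∧ ∀ i j, i ≠ j → EdgeDisjoint (p i) (p j)

/-- `conk G k` : the number of equivalence classes of `k`-edge-connected vertices. -/
noncomputable def conk (G : Multigraph V E) (k : ℕ) : ℕ :=
  Nat.card (Quotient (Relation.EqvGen.setoid (G.KConn k)))

/-- The number of connected components of `G`. -/
noncomputable def con (G : Multigraph V E) : ℕ := G.conk 1

section Homology

variable [Fintype V] [Fintype E] [DecidableEq V] [DecidableEq E]

/-- The vector in `F₂^V` which is the sum of the two endpoints of the edge `e`
(so a loop is sent to `0`). -/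
def edgeVec (G : Multigraph V E) (e : E) : V → ZMod 2 := fun v =>
  Sym2.lift ⟨fun a b => (if v = a then (1 : ZMod 2) else 0) + (if v = b then 1 else 0),
    fun _ _ => add_comm _ _⟩ (G.ends e)

/-- The boundary map `δ : F₂^E → F₂^V`, sending each edge to the sum of its two
adjacent vertices. -/
def boundary (G : Multigraph V E) : (E → ZMod 2) →ₗ[ZMod 2] (V → ZMod 2) where
  toFun c := fun v => ∑ e, c e * G.edgeVec e v
  map_add' c d := by
    funext v
    simp [add_mul, Finset.sum_add_distrib]
  map_smul' r c := by
    funext v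
    simp [Finset.mul_sum, mul_assoc]

/-- The Cycle Space of `G` : the kernel of the boundary map. -/
def cycleSpace (G : Multigraph V E) : Submodule (ZMod 2) (E → ZMod 2) :=
  LinearMap.ker G.boundary

/-- The indicator vector of a vertex in `F₂^V`. -/
def vert (v : V) : V → ZMod 2 := fun w => if w = v then 1 else 0

/-- A `k`-weak homological cycle: a homological path between two `k`-edge-connected
vertices. -/
def IsWeakCycle (G : Multigraph V E) (k : ℕ) (c : E → ZMod 2) : Prop :=
  ∃ v w, G.KConn k v w ∧ G.boundary c = vert v + vert w

/-- The `k`-Weak Cycle Space: the span of all `k`-weak homological cycles. -/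
def weakCycleSpace (G : Multigraph V E) (k : ℕ) : Submodule (ZMod 2) (E → ZMod 2) :=
  Submodule.span (ZMod 2) {c | G.IsWeakCycle k c}

/-- `eps p` : the set of edges of the ttrail `p`, as a vector in `F₂^E`. -/
def eps (p : List (V × E)) : E → ZMod 2 := fun e => if e ∈ p.map Prod.snd then 1 else 0

/-- The `F₂`-linear extension of `f : E → A` to subsets of `E`: the sum of `f` over
the edges of the subset `S`. -/
def fSum {A : Type*} [AddCommGroup A] (f : E → A) (S : E → ZMod 2) : A :=
  ∑ e ∈ Finset.univ.filter fun e => S e = 1, f e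

end Homology

section Balanced

variable {A : Type*} [AddCommGroup A]

/-- The sum `g(v₁)+f(e₁)+…+g(vₙ)+f(eₙ)` of the values of a vertex-function `g` and an
edge-function `f` along a ttrail `v₁,e₁,…,vₙ,eₙ`. -/
def pathSum (g : V → A) (f : E → A) (p : List (V × E)) : A :=
  (p.map fun ve => g ve.1 + f ve.2).sum

/-- The sum `h(v₁)+h(e₁)+…+h(vₙ)+h(eₙ)` of the values of `h : V ∪ E → A` along a
ttrail `v₁,e₁,…,vₙ,eₙ`. -/
def wSum (h : V ⊕ E → A) (p : List (V × E)) : A :=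
  (p.map fun ve => h (Sum.inl ve.1) + h (Sum.inr ve.2)).sum

lemma pathSum_cons (g : V → A) (f : E → A) (a : V × E) (t : List (V × E)) :
    pathSum g f (a :: t) = (g a.1 + f a.2) + pathSum g f t := by
  simp [pathSum]

lemma pathSum_zero (p : List (V × E)) : pathSum (0 : V → A) (0 : E → A) p = 0 := by
  induction p with
  | nil => simp [pathSum]
  | cons a t ih => simp [pathSum_cons, ih]

lemma pathSum_add (g g' : V → A) (f f' : E → A) (p : List (V × E)) :
    pathSum (g + g') (f + f') p = pathSum g f p + pathSum g' f' p := by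
  induction p with
  | nil => simp [pathSum]
  | cons a t ih => simp only [pathSum_cons, Pi.add_apply, ih]; abel

lemma pathSum_neg (g : V → A) (f : E → A) (p : List (V × E)) :
    pathSum (-g) (-f) p = -pathSum g f p := by
  induction p with
  | nil => simp [pathSum]
  | cons a t ih => simp only [pathSum_cons, Pi.neg_apply, ih]; abel

lemma wSum_cons (h : V ⊕ E → A) (a : V × E) (t : List (V × E)) :
    wSum h (a :: t) = (h (Sum.inl a.1) + h (Sum.inr a.2)) + wSum h t := by
  simp [wSum]

lemma wSum_zero (p : List (V × E)) : wSum (0 : V ⊕ E → A) p = 0 := by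
  induction p with
  | nil => simp [wSum]
  | cons a t ih => simp [wSum_cons, ih]

lemma wSum_add (h h' : V ⊕ E → A) (p : List (V × E)) :
    wSum (h + h') p = wSum h p + wSum h' p := by
  induction p with
  | nil => simp [wSum]
  | cons a t ih => simp only [wSum_cons, Pi.add_apply, ih]; abel

lemma wSum_neg (h : V ⊕ E → A) (p : List (V × E)) :
    wSum (-h) p = -wSum h p := by
  induction p with
  | nil => simp [wSum]
  | cons a t ih => simp only [wSum_cons, Pi.neg_apply, ih]; abel

/-- A function `f : E → A` is balanced if the sum of its values along every closed
ttrail of `G` is zero. -/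
def BalancedE (G : Multigraph V E) (f : E → A) : Prop :=
  ∀ x p, G.IsTtrail x x p → pathSum (0 : V → A) f p = 0

/-- A function `g : V → A` is balanceable if some `f : E → A` balances it, i.e. the
sum of the values of `g` and `f` along every closed ttrail of `G` is zero. -/
def Balanceable (G : Multigraph V E) (g : V → A) : Prop :=
  ∃ f : E → A, ∀ x p, G.IsTtrail x x p → pathSum g f p = 0

/-- A function `h : V ∪ E → A` is balanced if the sum of its values along every
closed ttrail of `G` is zero. -/
def BalancedW (G : Multigraph V E) (h : V ⊕ E → A) : Prop :=
  ∀ x p, G.IsTtrail x x p → wSum h p = 0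

/-- `H(E,A)` : the group of balanced functions from `E` to `A`. -/
def Hgroup (G : Multigraph V E) (A : Type*) [AddCommGroup A] : AddSubgroup (E → A) where
  carrier := {f | G.BalancedE f}
  zero_mem' := fun _ p _ => pathSum_zero p
  add_mem' := by
    intro f f' hf hf' x p hp
    have h := pathSum_add (0 : V → A) 0 f f' p
    rw [add_zero] at h
    rw [h, hf x p hp, hf' x p hp, add_zero]
  neg_mem' := by
    intro f hf x p hp
    have h := pathSum_neg (0 : V → A) f p
    rw [neg_zero] at h
    rw [h, hf x p hp, neg_zero]

/-- `B(V,A)` : the group of balanceable functions from `V` to `A`. -/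
def Bgroup (G : Multigraph V E) (A : Type*) [AddCommGroup A] : AddSubgroup (V → A) where
  carrier := {g | G.Balanceable g}
  zero_mem' := ⟨0, fun _ p _ => pathSum_zero p⟩
  add_mem' := by
    rintro g g' ⟨f, hf⟩ ⟨f', hf'⟩
    exact ⟨f + f', fun x p hp => by rw [pathSum_add, hf x p hp, hf' x p hp, add_zero]⟩
  neg_mem' := by
    rintro g ⟨f, hf⟩
    exact ⟨-f, fun x p hp => by rw [pathSum_neg, hf x p hp, neg_zero]⟩

/-- `W(V ∪ E, A)` : the group of balanced functions from `V ∪ E` to `A`. -/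
def Wgroup (G : Multigraph V E) (A : Type*) [AddCommGroup A] : AddSubgroup (V ⊕ E → A) where
  carrier := {h | G.BalancedW h}
  zero_mem' := fun _ p _ => wSum_zero p
  add_mem' := by
    intro h h' hh hh' x p hp
    rw [wSum_add, hh x p hp, hh' x p hp, add_zero]
  neg_mem' := by
    intro h hh x p hp
    rw [wSum_neg, hh x p hp, neg_zero]

end Balanced

/-- A `3`-weakly closed ttrail (a ttrail between `3`-edge-connected vertices) which is
short: no inner vertex is `3`-edge-connected to the initial vertex. -/
def ShortW (G : Multigraph V E) (x y : V) (p : List (V × E)) : Prop :=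
  G.IsTtrail x y p ∧ G.KConn 3 x y ∧ ∀ v ∈ (p.map Prod.fst).tail, ¬ G.KConn 3 v x

/-- `G.ShortChain x y L` : `L` is a list of nontrivial short `3`-weakly closed ttrails
which concatenate into a ttrail from `x` to `y`. -/
def ShortChain (G : Multigraph V E) : V → V → List (List (V × E)) → Prop
  | x, y, [] => x = y
  | x, y, s :: rest => s ≠ [] ∧ ∃ z, G.ShortW x z s ∧ G.ShortChain z y rest

/-- `A₂` : the subgroup of elements of order dividing `2` in `A`. -/
def torsion2 (A : Type*) [AddCommGroup A] : AddSubgroup A where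
  carrier := {a | 2 • a = 0}
  zero_mem' := by simp
  add_mem' := by
    intro a b ha hb
    simp only [Set.mem_setOf_eq] at *
    rw [smul_add, ha, hb, add_zero]
  neg_mem' := by
    intro a ha
    simp only [Set.mem_setOf_eq] at *
    rw [smul_neg, ha, neg_zero]

/-- `2A` : the image of the doubling map `a ↦ 2a`. -/
def double2 (A : Type*) [AddCommGroup A] : AddSubgroup A where
  carrier := {b | ∃ a, b = 2 • a}
  zero_mem' := ⟨0, by simp⟩
  add_mem' := by
    rintro a b ⟨x, rfl⟩ ⟨y, rfl⟩
    exact ⟨x + y, by rw [smul_add]⟩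
  neg_mem' := by
    rintro a ⟨x, rfl⟩
    exact ⟨-x, by rw [smul_neg]⟩

end Multigraph

namespace Multigraph

variable {V E : Type*} [Fintype V] [Fintype E] [DecidableEq V] [DecidableEq E]

/-!
A function `g` turns out to be balanceable exactly when `g v - g w ∈ 2A` for all
`3`-edge-connected `v` and `w`; the isomorphism then records `g` on one representative of each
class, and the difference to the representative on every other vertex.

For necessity, let `P₁, P₂, P₃` be edge-disjoint trails from `v` to `w`. Closing up `Pᵢ` with the
reverse of `Pⱼ` shows that their sums satisfy `s(Pᵢ) + s(Pⱼ) = g v - g w` for all `i ≠ j`, so the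
three sums agree and `g v - g w = 2 s(P₁)`.

For sufficiency, `2 h` is balanced by `e ↦ -(h a + h b)` on edges `e = ab`, so it remains to
balance the multiples of the indicator of a class `C`. If at most two edges leave `S`, the
indicator of `S` is balanceable: halve the function balancing `2 · 1_S`, rounding with opposite
signs on the two edges of the cut. By Menger's theorem every vertex outside `C` lies in such an
`S` disjoint from `C`, and by posimodularity of the cut function these sets can be uncrossed, so
the complement of `C` is a disjoint union of sets with at most two leaving edges.
-/

section Balanceability

omit [Fintype V] [Fintype E] [DecidableEq V] [DecidableEq E]

variable {G : Multigraph V E} {A : Type*} [AddCommGroup A] {g : V → A} {f : E → A}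
  {v w x y : V} {p q : List (V × E)} {α : Type*}

/-! ### Chains and trails -/

lemma isChain_append : G.IsChain x y (p ++ q) ↔ ∃ z, G.IsChain x z p ∧ G.IsChain z y q := by
  induction p generalizing x with
  | nil => simp [IsChain]
  | cons a t ih => simp only [List.cons_append, IsChain, ih]; grind

lemma IsChain.exists_isTtrail_subset (hp : G.IsChain x y p) : ∃ q, G.IsTtrail x y q ∧ q ⊆ p := by
  induction p generalizing x with
  | nil => exact ⟨[], ⟨hp, List.nodup_nil⟩, List.Subset.refl _⟩
  | cons a t ih =>
    obtain ⟨v, e⟩ := a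
    obtain ⟨rfl, w, hvw, ht⟩ := hp
    obtain ⟨q, ⟨hq, hq_nodup⟩, hqt⟩ := ih ht
    by_cases he : e ∈ q.map Prod.snd
    · obtain ⟨⟨b, e⟩, hbe, rfl⟩ := List.mem_map.1 he
      obtain ⟨q₁, q₂, rfl⟩ := List.append_of_mem hbe
      obtain ⟨_, -, rfl, c, hbc, hq₂⟩ := isChain_append.1 hq
      have hsuffix_nodup := hq_nodup.sublist ((List.sublist_append_right q₁ _).map Prod.snd)
      rcases Sym2.eq_iff.1 (hbc.symm.trans hvw) with ⟨rfl, rfl⟩ | ⟨rfl, rfl⟩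
      · exact ⟨(b, e) :: q₂, ⟨⟨rfl, c, hbc, hq₂⟩, hsuffix_nodup⟩, fun u hu ↦
          List.mem_cons_of_mem _ (hqt (List.mem_append_right _ hu))⟩
      · exact ⟨q₂, ⟨hq₂, (List.nodup_cons.1 hsuffix_nodup).2⟩, fun u hu ↦
          List.mem_cons_of_mem _ (hqt (List.mem_append_right _ (List.mem_cons_of_mem _ hu)))⟩
    · exact ⟨(v, e) :: q, ⟨⟨rfl, w, hvw, hq⟩, List.nodup_cons.2 ⟨he, hq_nodup⟩⟩,
        List.cons_subset_cons _ hqt⟩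

lemma exists_isTtrail_or_exists_separating_set (G : Multigraph V E) (P : V → E → Prop) (v w : V) :
    (∃ p, G.IsTtrail v w p ∧ ∀ a ∈ p, P a.1 a.2) ∨
      ∃ S : Set V, v ∈ S ∧ w ∉ S ∧ ∀ a ∈ S, ∀ b ∉ S, ∀ e, G.ends e = s(a, b) → ¬ P a e := by
  let S : Set V := {b | ∃ p, G.IsChain v b p ∧ ∀ a ∈ p, P a.1 a.2}
  by_cases hw : w ∈ S
  · obtain ⟨p, hp, hP⟩ := hw
    obtain ⟨q, hq, hqp⟩ := hp.exists_isTtrail_subset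
    exact .inl ⟨q, hq, fun a ha ↦ hP a (hqp ha)⟩
  · refine .inr ⟨S, ⟨[], rfl, by simp⟩, hw, ?_⟩
    rintro a ⟨p, hp, hP⟩ b hb e he hPe
    refine hb ⟨p ++ [(a, e)], isChain_append.2 ⟨a, hp, rfl, b, he, rfl⟩, fun c hc ↦ ?_⟩
    rcases List.mem_append.1 hc with hc | hc
    · exact hP c hc
    · obtain rfl := List.mem_singleton.1 hc
      exact hPe

/-! ### Cuts -/

/-- The edge cut of a vertex set `S`: the edges with exactly one endpoint in `S`. -/
def cut (G : Multigraph V E) (S : Set V) : Set E := {e | ∃ a ∈ S, ∃ b ∉ S, G.ends e = s(a, b)}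

lemma mem_cut_iff {S : Set V} {e : E} {a b : V} (he : G.ends e = s(a, b)) :
    e ∈ G.cut S ↔ (a ∈ S ↔ b ∉ S) := by
  simp only [cut, Set.mem_ofPred_eq, he, Sym2.eq_iff]
  grind

lemma cut_univ (G : Multigraph V E) : G.cut Set.univ = ∅ := by simp [cut]

lemma encard_cut_sdiff_add_encard_cut_sdiff_le (G : Multigraph V E) (S T : Set V) :
    (G.cut (S \ T)).encard + (G.cut (T \ S)).encard ≤ (G.cut S).encard + (G.cut T).encard := by
  rw [← Set.encard_union_add_encard_inter, ← Set.encard_union_add_encard_inter (G.cut S)]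
  refine add_le_add (Set.encard_le_encard fun e ↦ ?_) (Set.encard_le_encard fun e ↦ ?_) <;>
  · obtain ⟨a, b, he⟩ : ∃ a b, G.ends e = s(a, b) := ⟨_, _, (Quot.out_eq _).symm⟩
    simp only [Set.mem_union, Set.mem_inter_iff, mem_cut_iff he, Set.mem_sdiff]
    tauto

lemma encard_cut_sdiff_le_two_or {S T : Set V} (hS : (G.cut S).encard ≤ 2)
    (hT : (G.cut T).encard ≤ 2) :
    (G.cut (S \ T)).encard ≤ 2 ∨ (G.cut (T \ S)).encard ≤ 2 := by
  by_contra! h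
  have h_lt : (2 + 2 : ℕ∞) < (G.cut (S \ T)).encard + (G.cut (T \ S)).encard :=
    ENat.add_lt_add h.1 h.2
  exact absurd (h_lt.trans_le (G.encard_cut_sdiff_add_encard_cut_sdiff_le S T))
    (add_le_add hS hT).not_gt

/-! ### Flows and Menger's theorem -/

/-- The `0`-chain `[a] - [b]`: the net outflow at each vertex of one unit sent from `a` to `b`. -/
noncomputable def displacement (a b : V) : V →₀ ℤ := .single a 1 - .single b 1

lemma displacement_add_displacement (a b c : V) :
    displacement a b + displacement b c = displacement a c :=
  sub_add_sub_cancel _ _ _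

@[simp]
lemma displacement_self (a : V) : displacement a a = 0 := sub_self _

/-- The net outflow at each vertex of the flow `φ`; see `IsFlow` for the encoding of flows. -/
noncomputable def divergence : (E →₀ V →₀ ℤ) →+ V →₀ ℤ :=
  Finsupp.liftAddHom fun _ ↦ AddMonoidHom.id _

/-- `φ` is a flow of value `k` from `v` to `w` with unit edge capacities. Instead of fixing an
orientation of `G`, the flow through `e` is given as the `0`-chain `φ e`, which is `[a] - [b]` if
`φ` sends a unit along `e` from `a` to `b`. -/
structure IsFlow (G : Multigraph V E) (v w : V) (k : ℕ) (φ : E →₀ V →₀ ℤ) : Prop where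
  capacity : ∀ e, φ e = 0 ∨ ∃ a b, G.ends e = s(a, b) ∧ φ e = displacement a b
  conservation : divergence φ = k • displacement v w

/-- The total amount of a `0`-chain that lies in the vertex set `S`. -/
noncomputable def massOn (S : Set V) : (V →₀ ℤ) →ₗ[ℤ] ℤ :=
  Finsupp.linearCombination ℤ (S.indicator 1)

lemma massOn_displacement (S : Set V) (a b : V) :
    massOn S (displacement a b) = S.indicator 1 a - S.indicator 1 b := by
  simp [massOn, displacement]

lemma IsTtrail.exists_pathFlow (hp : G.IsTtrail x y p) :
    ∃ χ : E →₀ V →₀ ℤ, divergence χ = displacement x y ∧ (∀ e ∉ p.map Prod.snd, χ e = 0) ∧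
      ∀ a e, (a, e) ∈ p → ∃ b, G.ends e = s(a, b) ∧ χ e = displacement a b := by
  obtain ⟨hchain, hnodup⟩ := hp
  induction p generalizing x with
  | nil =>
    obtain rfl : x = y := hchain
    exact ⟨0, by simp, by simp, by simp⟩
  | cons c t ih =>
    obtain ⟨u, e₀⟩ := c
    obtain ⟨rfl, z, hz, ht⟩ := hchain
    obtain ⟨he₀, ht_nodup⟩ := List.nodup_cons.1 hnodup
    obtain ⟨χ, hdiv, hoff, hon⟩ := ih ht ht_nodup
    refine ⟨.single e₀ (displacement u z) + χ, ?_, fun e he ↦ ?_, fun a e hae ↦ ?_⟩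
    · rw [map_add, hdiv, ← displacement_add_displacement u z y]
      simp [divergence]
    · obtain ⟨hne, het⟩ := not_or.1 (List.mem_cons.not.1 he)
      simp [Finsupp.single_eq_of_ne hne, hoff e het]
    · rcases List.mem_cons.1 hae with h | hae
      · obtain ⟨rfl, rfl⟩ := Prod.mk.inj h
        exact ⟨z, hz, by simp [hoff e he₀]⟩
      · have hne : e ≠ e₀ := fun h ↦ he₀ (List.mem_map.2 ⟨_, hae, h⟩)
        simpa [Finsupp.single_eq_of_ne hne] using hon a e hae

namespace IsFlow

variable {k : ℕ} {φ : E →₀ V →₀ ℤ} {S : Set V}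

lemma eq_zero_or_eq_displacement (hφ : G.IsFlow v w k φ) {e : E} {a b : V}
    (he : G.ends e = s(a, b)) :
    φ e = 0 ∨ φ e = displacement a b ∨ φ e = displacement b a := by
  rcases hφ.capacity e with h | ⟨c, d, hcd, h⟩
  · exact .inl h
  · rcases Sym2.eq_iff.1 (hcd.symm.trans he) with ⟨rfl, rfl⟩ | ⟨rfl, rfl⟩ <;> simp [h]

lemma sum_massOn (hφ : G.IsFlow v w k φ) (hv : v ∈ S) (hw : w ∉ S) :
    ∑ e ∈ φ.support, massOn S (φ e) = k := by
  have h := congrArg (massOn S) hφ.conservation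
  simpa [divergence, Finsupp.sum, massOn_displacement, hv, hw] using h

lemma massOn_eq_zero_of_notMem_cut (hφ : G.IsFlow v w k φ) {e : E} (he : e ∉ G.cut S) :
    massOn S (φ e) = 0 := by
  rcases hφ.capacity e with h | ⟨a, b, hab, h⟩
  · simp [h]
  · rw [mem_cut_iff hab] at he
    rw [h, massOn_displacement]
    by_cases ha : a ∈ S <;> by_cases hb : b ∈ S <;> simp_all

lemma encard_cut_eq_of_saturated (hφ : G.IsFlow v w k φ) (hv : v ∈ S) (hw : w ∉ S)
    (hsat : ∀ a ∈ S, ∀ b ∉ S, ∀ e, G.ends e = s(a, b) → φ e = displacement a b) :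
    (G.cut S).encard = k := by
  classical
  have hmass : ∀ e ∈ G.cut S, massOn S (φ e) = 1 := by
    rintro e ⟨a, ha, b, hb, he⟩
    simp [hsat a ha b hb e he, massOn_displacement, ha, hb]
  have hcut : G.cut S = ({e ∈ φ.support | e ∈ G.cut S} : Finset E) := by
    ext e
    suffices e ∈ G.cut S → φ e ≠ 0 by simpa using this
    intro he h
    simpa [h] using hmass e he
  have hcard : (#{e ∈ φ.support | e ∈ G.cut S} : ℤ) = k := by
    rw [← hφ.sum_massOn hv hw, ← sum_boole]
    refine sum_congr rfl fun e _ ↦ ?_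
    split_ifs with he
    · exact (hmass e he).symm
    · exact (hφ.massOn_eq_zero_of_notMem_cut he).symm
  rw [hcut, Set.encard_coe_eq_coe_finsetCard]
  exact_mod_cast hcard

lemma exists_augment (hφ : G.IsFlow v w k φ)
    (hcut : ∀ S : Set V, v ∈ S → w ∉ S → k < (G.cut S).encard) :
    ∃ ψ, G.IsFlow v w (k + 1) ψ := by
  rcases G.exists_isTtrail_or_exists_separating_set
    (fun a e ↦ ∀ b, G.ends e = s(a, b) → φ e ≠ displacement a b) v w with
    ⟨p, hp, hresidual⟩ | ⟨S, hv, hw, hsat⟩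
  · obtain ⟨χ, hdiv, hoff, hon⟩ := hp.exists_pathFlow
    refine ⟨φ + χ, fun e ↦ ?_, ?_⟩
    · by_cases he : e ∈ p.map Prod.snd
      · obtain ⟨⟨a, e⟩, hae, rfl⟩ := List.mem_map.1 he
        obtain ⟨b, hab, hχ⟩ := hon a e hae
        rcases hφ.eq_zero_or_eq_displacement hab with h | h | h
        · exact .inr ⟨a, b, hab, by simp [h, hχ]⟩
        · exact absurd h (hresidual _ hae b hab)
        · exact .inl (by simp [h, hχ, displacement_add_displacement])
      · simpa [hoff e he] using hφ.capacity e
    · rw [map_add, hφ.conservation, hdiv, succ_nsmul]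
  · refine absurd (hφ.encard_cut_eq_of_saturated hv hw fun a ha b hb e he ↦ ?_) (hcut S hv hw).ne'
    have hab := hsat a ha b hb e he
    push Not at hab
    obtain ⟨c, hc, h⟩ := hab
    rwa [Sym2.congr_right.1 (he.symm.trans hc)]

lemma exists_isTtrail_of_succ (hφ : G.IsFlow v w (k + 1) φ) :
    ∃ p, G.IsTtrail v w p ∧
      ∀ a e, (a, e) ∈ p → φ e ≠ 0 ∧ ∀ b, G.ends e = s(a, b) → φ e = displacement a b := by
  rcases G.exists_isTtrail_or_exists_separating_set
    (fun a e ↦ φ e ≠ 0 ∧ ∀ b, G.ends e = s(a, b) → φ e = displacement a b) v w with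
    ⟨p, hp, hP⟩ | ⟨S, hv, hw, hS⟩
  · exact ⟨p, hp, fun a e hae ↦ hP _ hae⟩
  · have hnonpos : ∑ e ∈ φ.support, massOn S (φ e) ≤ 0 := by
      refine sum_nonpos fun e he ↦ ?_
      by_cases hcut : e ∈ G.cut S
      · obtain ⟨a, ha, b, hb, hab⟩ := hcut
        rcases hφ.eq_zero_or_eq_displacement hab with h | h | h
        · simp [h]
        · refine absurd ⟨Finsupp.mem_support_iff.1 he, fun c hc ↦ ?_⟩ (hS a ha b hb e hab)
          rwa [← Sym2.congr_right.1 (hab.symm.trans hc)]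
        · simp [h, massOn_displacement, ha, hb]
      · exact (hφ.massOn_eq_zero_of_notMem_cut hcut).le
    rw [hφ.sum_massOn hv hw] at hnonpos
    omega

lemma exists_split_of_succ (hφ : G.IsFlow v w (k + 1) φ) :
    ∃ p ψ, G.IsTtrail v w p ∧ G.IsFlow v w k ψ ∧ (∀ e ∈ p.map Prod.snd, φ e ≠ 0 ∧ ψ e = 0) ∧
      ∀ e, ψ e ≠ 0 → φ e ≠ 0 := by
  obtain ⟨p, hp, hsent⟩ := hφ.exists_isTtrail_of_succ
  obtain ⟨χ, hdiv, hoff, hon⟩ := hp.exists_pathFlow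
  have hzero : ∀ e ∈ p.map Prod.snd, φ e ≠ 0 ∧ (φ - χ) e = 0 := by
    intro e he
    obtain ⟨⟨a, e⟩, hae, rfl⟩ := List.mem_map.1 he
    obtain ⟨b, hab, hχ⟩ := hon a e hae
    obtain ⟨hne, heq⟩ := hsent a e hae
    exact ⟨hne, by simp [hχ, heq b hab]⟩
  refine ⟨p, φ - χ, hp, ⟨fun e ↦ ?_, ?_⟩, hzero, fun e he ↦ ?_⟩
  · by_cases he : e ∈ p.map Prod.snd
    · exact .inl (hzero e he).2
    · simpa [hoff e he] using hφ.capacity e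
  · rw [map_sub, hφ.conservation, hdiv, succ_nsmul, add_sub_cancel_right]
  · by_cases hep : e ∈ p.map Prod.snd
    · exact (hzero e hep).1
    · simpa [hoff e hep] using he

lemma exists_edgeDisjoint_isTtrail (hφ : G.IsFlow v w k φ) :
    ∃ p : Fin k → List (V × E), (∀ i, G.IsTtrail v w (p i)) ∧
      (∀ i j, i ≠ j → EdgeDisjoint (p i) (p j)) ∧ ∀ i, ∀ e ∈ (p i).map Prod.snd, φ e ≠ 0 := by
  induction k generalizing φ with
  | zero => exact ⟨Fin.elim0, fun i ↦ i.elim0, fun i ↦ i.elim0, fun i ↦ i.elim0⟩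
  | succ k ih =>
    obtain ⟨p₀, ψ, hp₀, hψ, hp₀_edges, hψφ⟩ := hφ.exists_split_of_succ
    obtain ⟨p, hp, hdisj, hp_edges⟩ := ih hψ
    have hdisj₀ : ∀ i, ∀ e ∈ (p i).map Prod.snd, e ∉ p₀.map Prod.snd := fun i e he he₀ ↦
      hp_edges i e he (hp₀_edges e he₀).2
    refine ⟨Fin.cons p₀ p, Fin.cases hp₀ hp, Fin.cases (Fin.cases ?_ ?_) fun i ↦ Fin.cases ?_ ?_,
      Fin.cases (fun e he ↦ (hp₀_edges e he).1) fun i e he ↦ hψφ e (hp_edges i e he)⟩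
    · exact fun h ↦ absurd rfl h
    · exact fun j _ e he he' ↦ hdisj₀ j e he' he
    · exact fun _ e he ↦ hdisj₀ i e he
    · exact fun j hij ↦ hdisj i j fun h ↦ hij (congrArg Fin.succ h)

end IsFlow

lemma exists_isFlow_of_forall_le_encard_cut {k : ℕ}
    (hcut : ∀ S : Set V, v ∈ S → w ∉ S → k ≤ (G.cut S).encard) : ∃ φ, G.IsFlow v w k φ := by
  induction k with
  | zero => exact ⟨0, fun _ ↦ .inl rfl, by simp⟩
  | succ k ih =>
    have hlt : ∀ S : Set V, v ∈ S → w ∉ S → k < (G.cut S).encard := fun S hv hw ↦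
      (by exact_mod_cast k.lt_succ_self : (k : ℕ∞) < (k + 1 : ℕ)).trans_le (hcut S hv hw)
    obtain ⟨φ, hφ⟩ := ih fun S hv hw ↦ (hlt S hv hw).le
    exact hφ.exists_augment hlt

theorem exists_encard_cut_lt_of_not_kConn {k : ℕ} (h : ¬ G.KConn k v w) :
    ∃ S : Set V, v ∈ S ∧ w ∉ S ∧ (G.cut S).encard < k := by
  by_contra! hcut
  obtain ⟨φ, hφ⟩ := exists_isFlow_of_forall_le_encard_cut hcut
  obtain ⟨p, hp, hdisj, -⟩ := hφ.exists_edgeDisjoint_isTtrail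
  exact h (.inr ⟨p, hp, hdisj⟩)

/-! ### Balanceable functions are constant modulo `2A` on classes -/

lemma pathSum_append (g : V → A) (f : E → A) (p q : List (V × E)) :
    pathSum g f (p ++ q) = pathSum g f p + pathSum g f q := by
  simp [pathSum]

lemma IsChain.exists_reverse (hp : G.IsChain x y p) (g : V → A) (f : E → A) :
    ∃ q, G.IsChain y x q ∧ q.map Prod.snd = (p.map Prod.snd).reverse ∧
      pathSum g f q + g x = pathSum g f p + g y := by
  induction p generalizing x with
  | nil =>
    obtain rfl : x = y := hp
    exact ⟨[], rfl, rfl, rfl⟩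
  | cons a t ih =>
    obtain ⟨u, e⟩ := a
    obtain ⟨rfl, z, hz, ht⟩ := hp
    obtain ⟨q, hq, hq_edges, hq_sum⟩ := ih ht
    refine ⟨q ++ [(z, e)], isChain_append.2 ⟨z, hq, rfl, u, hz.trans Sym2.eq_swap, rfl⟩,
      by simp [hq_edges], ?_⟩
    calc pathSum g f (q ++ [(z, e)]) + g u
        = (pathSum g f q + g z) + f e + g u := by
          rw [pathSum_append]; simp only [pathSum, List.map_cons, List.map_nil, List.sum_cons,
            List.sum_nil]; abel
      _ = pathSum g f ((u, e) :: t) + g y := by rw [hq_sum, pathSum_cons]; abel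

lemma pathSum_add_pathSum_of_edgeDisjoint (hf : ∀ x p, G.IsTtrail x x p → pathSum g f p = 0)
    (hp : G.IsTtrail v w p) (hq : G.IsTtrail v w q) (hpq : EdgeDisjoint p q) :
    pathSum g f p + pathSum g f q = g v - g w := by
  obtain ⟨r, hr, hr_edges, hr_sum⟩ := hq.1.exists_reverse g f
  have hnodup : ((p ++ r).map Prod.snd).Nodup := by
    rw [List.map_append, hr_edges]
    exact hp.2.append (List.nodup_reverse.2 hq.2) fun e he he' ↦ hpq e he (List.mem_reverse.1 he')
  have hclosed := hf v (p ++ r) ⟨isChain_append.2 ⟨w, hp.1, hr⟩, hnodup⟩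
  rw [pathSum_append] at hclosed
  rw [eq_sub_of_add_eq hr_sum.symm, ← zero_add (g v - g w), ← hclosed]
  abel

lemma sub_mem_double2_of_kConn (hg : g ∈ G.Bgroup A) (h : G.KConn 3 v w) :
    g v - g w ∈ double2 A := by
  rcases h with rfl | ⟨p, hp, hdisj⟩
  · simp
  · obtain ⟨f, hf⟩ := hg
    have hsum : ∀ i j, i ≠ j → pathSum g f (p i) + pathSum g f (p j) = g v - g w := fun i j hij ↦
      pathSum_add_pathSum_of_edgeDisjoint hf (hp i) (hp j) (hdisj i j hij)
    have h12 : pathSum g f (p 1) = pathSum g f (p 2) :=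
      add_left_cancel ((hsum 0 1 (by decide)).trans (hsum 0 2 (by decide)).symm)
    exact ⟨pathSum g f (p 2), by rw [← hsum 1 2 (by decide), h12, two_nsmul]⟩

/-- The subgroup of functions that are constant modulo `D` on every class of `s`. -/
def constMod (s : Setoid α) (D : AddSubgroup A) : AddSubgroup (α → A) where
  carrier := {g | ∀ v w, s v w → g v - g w ∈ D}
  zero_mem' := by simp
  add_mem' hg hg' v w h := by
    simpa only [Pi.add_apply, add_sub_add_comm] using D.add_mem (hg v w h) (hg' v w h)
  neg_mem' hg v w h := by
    simpa only [Pi.neg_apply, neg_sub_neg, neg_sub] using D.neg_mem (hg v w h)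

lemma bgroup_le_constMod (G : Multigraph V E) :
    G.Bgroup A ≤ constMod (Relation.EqvGen.setoid (G.KConn 3)) (double2 A) := by
  intro g hg v w h
  induction h with
  | rel v w h => exact sub_mem_double2_of_kConn hg h
  | refl v => simp
  | symm v w _ ih => simpa only [neg_sub] using neg_mem ih
  | trans u v w _ _ ih ih' => simpa only [sub_add_sub_cancel] using add_mem ih ih'

/-! ### Doubles are balanceable -/

/-- The sum of `h` over the two endpoints of `e`; a loop at `a` gives `2 • h a`. -/
def endsSum (G : Multigraph V E) (h : V → A) (e : E) : A :=
  Sym2.lift ⟨fun a b ↦ h a + h b, fun _ _ ↦ add_comm _ _⟩ (G.ends e)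

lemma endsSum_eq {h : V → A} {e : E} {a b : V} (he : G.ends e = s(a, b)) :
    G.endsSum h e = h a + h b := by
  rw [endsSum, he, Sym2.lift_mk]

lemma IsChain.pathSum_two_nsmul_neg_endsSum (hp : G.IsChain x y p) (h : V → A) :
    pathSum (2 • h) (-G.endsSum h) p = h x - h y := by
  induction p generalizing x with
  | nil =>
    obtain rfl : x = y := hp
    simp [pathSum]
  | cons a t ih =>
    obtain ⟨_, e⟩ := a
    obtain ⟨rfl, z, hz, ht⟩ := hp
    rw [pathSum_cons, ih ht]
    simp only [Pi.smul_apply, Pi.neg_apply, endsSum_eq hz]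
    abel

lemma two_nsmul_mem_bgroup (G : Multigraph V E) (h : V → A) : 2 • h ∈ G.Bgroup A :=
  ⟨-G.endsSum h, fun x _ hp ↦ (hp.1.pathSum_two_nsmul_neg_endsSum h).trans (sub_self (h x))⟩

/-! ### Indicators of sets with small cuts are balanceable -/

lemma exists_signing_of_encard_le_two {B : Set E} (hB : B.encard ≤ 2) :
    ∃ σ : E → ℤ, (∀ e, Odd (σ e) ↔ e ∈ B) ∧ ∀ F : Finset E, |∑ e ∈ F, σ e| ≤ 1 := by
  classical
  rcases hB.lt_or_eq with hB | hB
  · rcases Set.encard_le_one_iff_eq.1 (Order.le_of_lt_add_one hB) with rfl | ⟨c, rfl⟩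
    · exact ⟨0, by simp, by simp⟩
    · refine ⟨Pi.single c 1, fun e ↦ ?_, fun F ↦ ?_⟩
      · by_cases h : e = c <;> simp [h]
      · rw [sum_pi_single']
        split_ifs <;> simp
  · obtain ⟨c, d, hcd, rfl⟩ := Set.encard_eq_two.1 hB
    refine ⟨Pi.single c 1 - Pi.single d 1, fun e ↦ ?_, fun F ↦ ?_⟩
    · by_cases hc : e = c <;> by_cases hd : e = d <;> simp_all
    · simp only [Pi.sub_apply, sum_sub_distrib, sum_pi_single']
      split_ifs <;> simp

lemma odd_endsSum_indicator_iff (S : Set V) (e : E) :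
    Odd (G.endsSum (S.indicator (1 : V → ℤ)) e) ↔ e ∈ G.cut S := by
  obtain ⟨a, b, he⟩ : ∃ a b, G.ends e = s(a, b) := ⟨_, _, (Quot.out_eq _).symm⟩
  rw [endsSum_eq he, mem_cut_iff he]
  by_cases ha : a ∈ S <;> by_cases hb : b ∈ S <;> simp [ha, hb]

lemma indicator_one_mem_bgroup_of_encard_cut_le_two {S : Set V} (hS : (G.cut S).encard ≤ 2) :
    S.indicator 1 ∈ G.Bgroup ℤ := by
  classical
  obtain ⟨σ, hodd, hσ⟩ := exists_signing_of_encard_le_two hS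
  have heven : ∀ e, Even (σ e - G.endsSum (S.indicator 1) e) := fun e ↦
    Int.even_sub'.2 ((hodd e).trans (odd_endsSum_indicator_iff S e).symm)
  choose f hf using heven
  refine ⟨f, fun x p hp ↦ ?_⟩
  have hdouble : pathSum (S.indicator 1) f p + pathSum (S.indicator 1) f p =
      ∑ e ∈ (p.map Prod.snd).toFinset, σ e := by
    have hff : f + f = σ + -G.endsSum (S.indicator 1) := by
      ext e
      simp [← hf e, sub_eq_add_neg]
    calc _ = pathSum (0 + 2 • S.indicator 1) (σ + -G.endsSum (S.indicator 1)) p := by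
          rw [← pathSum_add, hff, zero_add, two_nsmul]
      _ = pathSum 0 σ p := by
          rw [pathSum_add, hp.1.pathSum_two_nsmul_neg_endsSum, sub_self, add_zero]
      _ = _ := by simp [pathSum, List.sum_toFinset σ hp.2, Function.comp_def]
  have hbound := abs_le.1 (hσ (p.map Prod.snd).toFinset)
  omega

lemma comp_mem_bgroup {B : Type*} [AddCommGroup B] (θ : A →+ B) (hg : g ∈ G.Bgroup A) :
    θ ∘ g ∈ G.Bgroup B := by
  obtain ⟨f, hf⟩ := hg
  refine ⟨θ ∘ f, fun x p hp ↦ ?_⟩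
  simpa [pathSum, map_list_sum, Function.comp_def] using congrArg θ (hf x p hp)

lemma indicator_mem_bgroup_of_encard_cut_le_two {S : Set V} (hS : (G.cut S).encard ≤ 2) (a : A) :
    S.indicator (fun _ ↦ a) ∈ G.Bgroup A := by
  convert comp_mem_bgroup (zmultiplesHom A a) (indicator_one_mem_bgroup_of_encard_cut_le_two hS)
  ext v
  by_cases hv : v ∈ S <;> simp [hv]

-- The indicator of `S` is balanceable over `ℤ`, hence constant modulo `2` on classes.
lemma mem_of_eqvGen_of_encard_cut_le_two {S : Set V} (hS : (G.cut S).encard ≤ 2)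
    (h : Relation.EqvGen (G.KConn 3) v w) (hv : v ∈ S) : w ∈ S := by
  obtain ⟨n, hn⟩ :=
    bgroup_le_constMod G (indicator_one_mem_bgroup_of_encard_cut_le_two hS) v w h
  by_contra hw
  simp only [Set.indicator_of_mem hv, Set.indicator_of_notMem hw, Pi.one_apply, nsmul_eq_mul] at hn
  omega

/-! ### Uncrossing -/

lemma biUnion_insert_sdiff_erase [DecidableEq (Set α)] {F : Finset (Set α)} {S T : Set α}
    (hS : S ∈ F) (hT : T ∈ F) (hne : T ≠ S) :
    ⋃ U ∈ insert (S \ T) (F.erase S), U = ⋃ U ∈ F, U := by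
  ext v
  simp only [Set.mem_iUnion, mem_insert, mem_erase, exists_prop]
  constructor
  · rintro ⟨U, rfl | ⟨-, hU⟩, hv⟩
    · exact ⟨S, hS, hv.1⟩
    · exact ⟨U, hU, hv⟩
  · rintro ⟨U, hU, hv⟩
    by_cases hvT : v ∈ T
    · exact ⟨T, .inr ⟨hne, hT⟩, hvT⟩
    · by_cases hUS : U = S
      · exact ⟨S \ T, .inl rfl, hUS ▸ hv, hvT⟩
      · exact ⟨U, .inr ⟨hUS, hU⟩, hv⟩

lemma sum_ncard_insert_sdiff_erase_lt [Finite α] [DecidableEq (Set α)] {F : Finset (Set α)}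
    {S T : Set α} (hS : S ∈ F) (hST : ¬ Disjoint S T) :
    ∑ U ∈ insert (S \ T) (F.erase S), U.ncard < ∑ U ∈ F, U.ncard :=
  calc ∑ U ∈ insert (S \ T) (F.erase S), U.ncard
      ≤ (S \ T).ncard + ∑ U ∈ F.erase S, U.ncard := by
        by_cases hmem : S \ T ∈ F.erase S
        · simp [insert_eq_of_mem hmem]
        · exact (sum_insert hmem).le
    _ < S.ncard + ∑ U ∈ F.erase S, U.ncard := by
      gcongr
      exact Set.ncard_lt_ncard
        (Set.sdiff_ssubset_left_iff.2 (Set.not_disjoint_iff_nonempty_inter.1 hST))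
    _ = ∑ U ∈ F, U.ncard := add_sum_erase F Set.ncard hS

lemma exists_pairwiseDisjoint_biUnion_eq_sUnion [Finite α] {P : Set α → Prop}
    (hP : ∀ S T, P S → P T → P (S \ T) ∨ P (T \ S)) {𝓕 : Set (Set α)} (h𝓕 : ∀ S ∈ 𝓕, P S) :
    ∃ D : Finset (Set α), (∀ S ∈ D, P S) ∧ (D : Set (Set α)).PairwiseDisjoint id ∧
      ⋃ S ∈ D, S = ⋃₀ 𝓕 := by
  classical
  obtain ⟨D, ⟨hDP, hDU⟩, hmin⟩ := exists_minimalFor_of_wellFoundedLT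
    (fun D : Finset (Set α) ↦ (∀ S ∈ D, P S) ∧ ⋃ S ∈ D, S = ⋃₀ 𝓕) (fun D ↦ ∑ S ∈ D, S.ncard)
    ⟨𝓕.toFinite.toFinset, by simpa using h𝓕, by simp [Set.sUnion_eq_biUnion]⟩
  refine ⟨D, hDP, fun S hS T hT hne ↦ ?_, hDU⟩
  by_contra hST
  wlog hdiff : P (S \ T) generalizing S T
  · exact this T hT S hS hne.symm (fun h ↦ hST h.symm)
      ((hP S T (hDP S hS) (hDP T hT)).resolve_left hdiff)
  refine (sum_ncard_insert_sdiff_erase_lt hS hST).not_ge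
    (hmin ⟨?_, (biUnion_insert_sdiff_erase hS hT hne.symm).trans hDU⟩
      (sum_ncard_insert_sdiff_erase_lt hS hST).le)
  exact forall_mem_insert .. |>.2 ⟨hdiff, fun U hU ↦ hDP U (mem_of_mem_erase hU)⟩

lemma indicator_sUnion_mem_bgroup [Finite V] {𝓕 : Set (Set V)}
    (h𝓕 : ∀ S ∈ 𝓕, (G.cut S).encard ≤ 2) (a : A) :
    (⋃₀ 𝓕).indicator (fun _ ↦ a) ∈ G.Bgroup A := by
  obtain ⟨D, hD, hdisj, hD𝓕⟩ :=
    exists_pairwiseDisjoint_biUnion_eq_sUnion (fun _ _ ↦ encard_cut_sdiff_le_two_or) h𝓕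
  have hsum : (⋃₀ 𝓕).indicator (fun _ ↦ a) = ∑ S ∈ D, S.indicator fun _ ↦ a := by
    rw [← hD𝓕]
    ext v
    simpa using congrFun (indicator_biUnion D id hdisj (f := fun _ ↦ a)) v
  rw [hsum]
  exact sum_mem fun S hS ↦ indicator_mem_bgroup_of_encard_cut_le_two (hD S hS) a

lemma sUnion_small_cut_eq_compl_class (G : Multigraph V E) (u : V) :
    ⋃₀ {S | (G.cut S).encard ≤ 2 ∧ u ∉ S} = {v | Relation.EqvGen (G.KConn 3) v u}ᶜ := by
  ext v
  constructor
  · rintro ⟨S, ⟨hS, hu⟩, hv⟩ hvu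
    exact hu (mem_of_eqvGen_of_encard_cut_le_two hS hvu hv)
  · intro hv
    obtain ⟨S, hvS, huS, hS⟩ := exists_encard_cut_lt_of_not_kConn fun h ↦ hv (.rel v u h)
    exact ⟨S, ⟨Order.le_of_lt_add_one hS, huS⟩, hvS⟩

lemma indicator_class_mem_bgroup [Finite V] (G : Multigraph V E) (u : V) (a : A) :
    {v | Relation.EqvGen (G.KConn 3) v u}.indicator (fun _ ↦ a) ∈ G.Bgroup A := by
  have huniv := indicator_mem_bgroup_of_encard_cut_le_two (G := G) (S := .univ)
    (by simp [cut_univ]) a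
  have hcompl := indicator_sUnion_mem_bgroup (G := G)
    (𝓕 := {S | (G.cut S).encard ≤ 2 ∧ u ∉ S}) (fun S hS ↦ hS.1) a
  rw [sUnion_small_cut_eq_compl_class, Set.indicator_compl] at hcompl
  simpa using sub_mem huniv hcompl

theorem bgroup_eq_constMod [Finite V] (G : Multigraph V E) :
    G.Bgroup A = constMod (Relation.EqvGen.setoid (G.KConn 3)) (double2 A) := by
  classical
  refine le_antisymm (bgroup_le_constMod G) fun g hg ↦ ?_
  let s := Relation.EqvGen.setoid (G.KConn 3)
  have := Fintype.ofFinite (Quotient s)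
  choose h hh using fun v ↦ hg v _ (s.symm (Quotient.mk_out v))
  have hdecomp : g = 2 • h + ∑ q : Quotient s, {v | s v q.out}.indicator fun _ ↦ g q.out := by
    ext v
    have hmem : ∀ q : Quotient s, s v q.out ↔ ⟦v⟧ = q := fun q ↦ Quotient.mk_eq_iff_out.symm
    simp [Set.indicator_apply, hmem, ← hh v]
  rw [hdecomp]
  exact add_mem (G.two_nsmul_mem_bgroup h)
    (sum_mem fun q _ ↦ G.indicator_class_mem_bgroup q.out (g q.out))

/-! ### Splitting off representatives -/

open Classical in
/-- A function constant modulo `D` on the classes of `s` amounts to its values on the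
representatives `Quotient.out` together with, at every other point, its difference to the
representative. -/
noncomputable def constModEquiv (s : Setoid α) (D : AddSubgroup A) :
    constMod s D ≃+ (Quotient s → A) × (↥(Set.range (Quotient.out (s := s)))ᶜ → D) where
  toFun g := (fun q ↦ g.1 q.out,
    fun v ↦ ⟨g.1 v - g.1 (⟦v.1⟧ : Quotient s).out, g.2 _ _ (s.symm (Quotient.mk_out v.1))⟩)
  invFun ab := ⟨fun v ↦ ab.1 ⟦v⟧ + if hv : v ∈ (Set.range Quotient.out)ᶜ then ab.2 ⟨v, hv⟩ else 0,
    fun v w h ↦ by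
      simp only [(Quotient.sound h : (⟦v⟧ : Quotient s) = ⟦w⟧), add_sub_add_left_eq_sub]
      split_ifs <;> simp [D.sub_mem]⟩
  left_inv g := by
    ext v
    by_cases hv : v ∈ Set.range (Quotient.out (s := s))
    · obtain ⟨q, rfl⟩ := hv
      simp
    · simp_all
  right_inv ab := by
    ext v <;> simp
  map_add' g g' := by
    ext v
    · simp
    · exact add_sub_add_comm ..

lemma card_compl_range_out [Finite α] (s : Setoid α) :
    Nat.card ↥(Set.range (Quotient.out (s := s)))ᶜ = Nat.card α - Nat.card (Quotient s) := by
  rw [Nat.card_coe_set_eq, Set.ncard_compl, Set.ncard_range_of_injective Quotient.out_injective]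

end Balanceability

omit [Fintype E] [DecidableEq V] [DecidableEq E] in
theorem stmt15_general (G : Multigraph V E) (A : Type*) [AddCommGroup A] :
    Nonempty ((G.Bgroup A) ≃+
      ((Fin (G.conk 3) → A) ×
        (Fin (Fintype.card V - G.conk 3) → double2 A))) := by
  let s := Relation.EqvGen.setoid (G.KConn 3)
  let classEquiv : Quotient s ≃ Fin (G.conk 3) := Finite.equivFin _
  have hcard : Nat.card ↥(Set.range (Quotient.out (s := s)))ᶜ = Fintype.card V - G.conk 3 := by
    rw [card_compl_range_out, Nat.card_eq_fintype_card, conk]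
  let restEquiv := Finite.equivFinOfCardEq hcard
  exact ⟨(AddEquiv.addSubgroupCongr G.bgroup_eq_constMod).trans <|
    (constModEquiv s (double2 A)).trans <|
      (AddEquiv.arrowCongr classEquiv (.refl A)).prodCongr
        (AddEquiv.arrowCongr restEquiv (.refl (double2 A)))⟩

theorem stmt15 (G : Multigraph V E) (A : Type*) [AddCommGroup A] :
    Nonempty ((G.Bgroup A) ≃+
      ((Fin (G.conk 3) → A) ×
        (Fin (Fintype.card V - G.conk 3) → double2 A))) :=
  G.stmt15_general A

end Multigraph
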